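/- Let ρ be the density matrix (1/6)(I − Σ_{i=1}^{6}|φ_i⟩⟨φ_i|) on ℂ^3 ⊗ ℂ^4 from the paper's bound-entanglement construction, let U be the unitary [[1/2, √3/2, 0], [−√3/2, 1/2, 0], [0, 0, 1]] acting on the ℂ^3 factor, and let Λ be the Choi map on M_3(ℂ). Then the operator (Λ ⊗ id_{M_4})((U ⊗ I) ρ (U ⊗ I)*) is not positive semidefinite (its minimum eigenvalue is negative). Consequently ρ is not a separable state across the ℂ^3 | ℂ^4 cut. -/

import Mathlib

open scoped ComplexOrder Kronecker

noncomputable section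

def ket {n : ℕ} (k : Fin n) : Fin n → ℂ := fun j => if j = k then 1 else 0

def dif {n : ℕ} (a b : Fin n) : Fin n → ℂ :=
  fun j => if j = a then 1 else if j = b then -1 else 0

def tp (u : Fin 3 → ℂ) (v w : Fin 2 → ℂ) : Fin 3 × Fin 2 × Fin 2 → ℂ :=
  fun p => u p.1 * v p.2.1 * w p.2.2

/-- The six normalized vectors `|φ_1⟩, …, |φ_6⟩` in `ℂ^3 ⊗ ℂ^2 ⊗ ℂ^2`. -/
def phi (i : Fin 6) : Fin 3 × Fin 2 × Fin 2 → ℂ :=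
  match i with
  | 0 => (Real.sqrt 2 : ℂ)⁻¹ • tp (dif 0 1) (ket 0) (ket 0)
  | 1 => (Real.sqrt 2 : ℂ)⁻¹ • tp (dif 2 0) (ket 1) (ket 0)
  | 2 => (Real.sqrt 2 : ℂ)⁻¹ • tp (ket 1) (ket 1) (dif 0 1)
  | 3 => (Real.sqrt 2 : ℂ)⁻¹ • tp (dif 1 2) (ket 0) (ket 1)
  | 4 => (Real.sqrt 2 : ℂ)⁻¹ • tp (ket 0) (dif 0 1) (ket 1)
  | 5 => (Real.sqrt 12 : ℂ)⁻¹ • tp (fun _ => 1) (fun _ => 1) (fun _ => 1)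

def split4 (k : Fin 4) : Fin 2 × Fin 2 := (⟨k.val / 2, by omega⟩, ⟨k.val % 2, by omega⟩)

/-- `|φ_i⟩` viewed in `ℂ^3 ⊗ ℂ^4`. -/
def phi' (i : Fin 6) : Fin 3 × Fin 4 → ℂ := fun p => phi i (p.1, split4 p.2)

/-- The state `ρ = (1/6)(I − Σ_{i=1}^{6} |φ_i⟩⟨φ_i|)` on `ℂ^3 ⊗ ℂ^4`. -/
def rho : Matrix (Fin 3 × Fin 4) (Fin 3 × Fin 4) ℂ :=
  (6 : ℂ)⁻¹ • ((1 : Matrix (Fin 3 × Fin 4) (Fin 3 × Fin 4) ℂ)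
    - ∑ i : Fin 6, Matrix.vecMulVec (phi' i) (star (phi' i)))

/-- The unitary `U` of Eq. (8). -/
def U : Matrix (Fin 3) (Fin 3) ℂ :=
  !![1/2, (Real.sqrt 3 : ℂ)/2, 0;
     -(Real.sqrt 3 : ℂ)/2, 1/2, 0;
     0, 0, 1]

/-- The (normalized) Choi map `Λ : M_3(ℂ) → M_3(ℂ)` of Eq. (7). -/
def choiMap (A : Matrix (Fin 3) (Fin 3) ℂ) : Matrix (Fin 3) (Fin 3) ℂ :=
  (2 : ℂ)⁻¹ • !![A 0 0 + A 1 1, -A 0 1, -A 0 2;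
                 -A 1 0, A 1 1 + A 2 2, -A 1 2;
                 -A 2 0, -A 2 1, A 2 2 + A 0 0]

/-- The induced map `Λ ⊗ id_{M_4}` acting blockwise. -/
def lamTensorId (M : Matrix (Fin 3 × Fin 4) (Fin 3 × Fin 4) ℂ) :
    Matrix (Fin 3 × Fin 4) (Fin 3 × Fin 4) ℂ :=
  Matrix.of fun p q => choiMap (Matrix.of fun a b => M (a, p.2) (b, q.2)) p.1 q.1

/-- Separability of a state on `ℂ^3 ⊗ ℂ^4`: a convex combination of products of density
matrices. -/
def Separable (M : Matrix (Fin 3 × Fin 4) (Fin 3 × Fin 4) ℂ) : Prop :=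
  ∃ (N : ℕ) (w : Fin N → ℝ) (σ : Fin N → Matrix (Fin 3) (Fin 3) ℂ)
    (τ : Fin N → Matrix (Fin 4) (Fin 4) ℂ),
    (∀ i, 0 ≤ w i) ∧ (∑ i, w i = 1) ∧
    (∀ i, (σ i).PosSemidef ∧ (σ i).trace = 1) ∧
    (∀ i, (τ i).PosSemidef ∧ (τ i).trace = 1) ∧
    M = ∑ i, (w i : ℂ) • (σ i ⊗ₖ τ i)

/-!
Writing `d i = 2 |x i|² + |x (i+1)|²`, the Choi map sends `x x*` to `(diag d - x x*) / 2`. This is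
positive semidefinite by Cauchy–Schwarz, because `∑ |x i|² / d i ≤ 1` for three cyclically ordered
nonnegative numbers. So `Λ` is a positive map, `Λ ⊗ id` sends separable states to positive
semidefinite operators, and separability is preserved by the local unitary `U ⊗ I`.

Each `φ_j` is a product vector `a_j ⊗ b_j`, so the quadratic form of `(Λ ⊗ id)((U ⊗ I) ρ (U ⊗ I)*)`
at a vector of `ℂ³ ⊗ ℂ⁴` is a combination of its squared norm and six Choi forms
`Λ(U a_j a_j* U*)` on `ℂ³`. At an integer vector close to the negative eigenvector it equals
`(691 - 400 √3) / 144 < 0`.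
-/

section General

open Matrix

variable {m n κ : Type*}

theorem vecMulVec_prod {R : Type*} [CommSemigroup R] (x u : m → R) (y v : κ → R) :
    vecMulVec (fun p : m × κ => x p.1 * y p.2) (fun p : m × κ => u p.1 * v p.2) =
      vecMulVec x u ⊗ₖ vecMulVec y v := by
  ext p q
  exact mul_mul_mul_comm _ _ _ _

theorem star_vec_dotProduct_kronecker_vecMulVec_mulVec {R : Type*} [CommSemiring R] [StarRing R]
    [Fintype m] [Fintype κ] (A : Matrix m m R) (b : κ → R) (X : Matrix κ m R) :
    star (vec X) ⬝ᵥ ((A ⊗ₖ vecMulVec b (star b)) *ᵥ vec X) =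
      star (star b ᵥ* X) ⬝ᵥ (A *ᵥ (star b ᵥ* X)) := by
  rw [kronecker_mulVec_vec, star_vec_dotProduct_vec, vecMulVec_mul, vecMulVec_mul, mul_vecMulVec,
    trace_vecMulVec, vecMul_transpose, star_vecMul, star_star]

theorem star_dotProduct_diagonal_sub_vecMulVec_mulVec {R : Type*} [CommRing R] [StarRing R]
    [Fintype n] [DecidableEq n] (d x y : n → R) :
    star y ⬝ᵥ ((diagonal d - vecMulVec x (star x)) *ᵥ y) =
      ∑ i, d i * (star (y i) * y i) - star (star x ⬝ᵥ y) * (star x ⬝ᵥ y) := by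
  have hdiag : star y ⬝ᵥ (diagonal d *ᵥ y) = ∑ i, d i * (star (y i) * y i) :=
    Finset.sum_congr rfl fun i _ => by rw [mulVec_diagonal, Pi.star_apply, mul_left_comm]
  have hrank : star y ⬝ᵥ (vecMulVec x (star x) *ᵥ y) = star (star x ⬝ᵥ y) * (star x ⬝ᵥ y) := by
    rw [vecMulVec_mulVec, dotProduct_smul, op_smul_eq_mul, star_dotProduct]
  rw [sub_mulVec, dotProduct_sub, hdiag, hrank]

variable {𝕜 : Type*} [RCLike 𝕜]

theorem norm_star_dotProduct_sq_le [Fintype n] {d : n → ℝ} {x : n → 𝕜} (hd : ∀ i, 0 ≤ d i)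
    (hx : ∀ i, d i = 0 → x i = 0) (h : ∑ i, ‖x i‖ ^ 2 / d i ≤ 1) (y : n → 𝕜) :
    ‖star x ⬝ᵥ y‖ ^ 2 ≤ ∑ i, d i * ‖y i‖ ^ 2 := by
  have htriangle : ‖star x ⬝ᵥ y‖ ≤ ∑ i, ‖x i‖ * ‖y i‖ := by
    simpa only [dotProduct, Pi.star_apply, norm_mul, norm_star]
      using norm_sum_le Finset.univ fun i => star x i * y i
  have hsplit (i : n) : (‖x i‖ * ‖y i‖) ^ 2 = ‖x i‖ ^ 2 / d i * (d i * ‖y i‖ ^ 2) := by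
    rcases eq_or_ne (d i) 0 with hi | hi
    · simp [hx i hi]
    · field_simp
  have hnonneg (i : n) : 0 ≤ d i * ‖y i‖ ^ 2 := mul_nonneg (hd i) (sq_nonneg _)
  calc ‖star x ⬝ᵥ y‖ ^ 2 ≤ (∑ i, ‖x i‖ * ‖y i‖) ^ 2 := by gcongr
    _ ≤ (∑ i, ‖x i‖ ^ 2 / d i) * ∑ i, d i * ‖y i‖ ^ 2 :=
      Finset.sum_sq_le_sum_mul_sum_of_sq_le_mul _ (fun i _ => div_nonneg (sq_nonneg _) (hd i))
        (fun i _ => hnonneg i) fun i _ => (hsplit i).le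
    _ ≤ ∑ i, d i * ‖y i‖ ^ 2 := mul_le_of_le_one_left (Finset.sum_nonneg fun i _ => hnonneg i) h

theorem posSemidef_diagonal_sub_vecMulVec [Fintype n] [DecidableEq n] {d : n → ℝ} {x : n → 𝕜}
    (hd : ∀ i, 0 ≤ d i) (hx : ∀ i, d i = 0 → x i = 0) (h : ∑ i, ‖x i‖ ^ 2 / d i ≤ 1) :
    (diagonal (fun i => (d i : 𝕜)) - vecMulVec x (star x)).PosSemidef := by
  refine .of_dotProduct_mulVec_nonneg ?_ fun y => ?_
  · refine (isHermitian_diagonal_of_self_adjoint _ ?_).sub (posSemidef_vecMulVec_self_star x).1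
    exact funext fun i => RCLike.conj_ofReal (d i)
  · have hform : star y ⬝ᵥ ((diagonal (fun i => (d i : 𝕜)) - vecMulVec x (star x)) *ᵥ y) =
        ((∑ i, d i * ‖y i‖ ^ 2 - ‖star x ⬝ᵥ y‖ ^ 2 : ℝ) : 𝕜) := by
      rw [star_dotProduct_diagonal_sub_vecMulVec_mulVec]
      simp only [RCLike.star_def, RCLike.conj_mul]
      push_cast
      rfl
    rw [hform, RCLike.ofReal_nonneg, sub_nonneg]
    exact norm_star_dotProduct_sq_le hd hx h y

theorem posSemidef_map_of_vecMulVec [Finite m] {Φ : Matrix m m 𝕜 →ₗ[𝕜] Matrix n n 𝕜}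
    (hΦ : ∀ x, (Φ (vecMulVec x (star x))).PosSemidef) {A : Matrix m m 𝕜} (hA : A.PosSemidef) :
    (Φ A).PosSemidef := by
  obtain ⟨N, v, rfl⟩ := posSemidef_iff_eq_sum_vecMulVec.mp hA
  rw [map_sum]
  exact posSemidef_sum _ fun i _ => hΦ (v i)

/-- The ampliation `Φ ⊗ id` of a linear map `Φ` between matrix algebras, acting on the matrix of
blocks indexed by `κ`. -/
def ampliation {R : Type*} [CommSemiring R] (κ : Type*) (Φ : Matrix m m R →ₗ[R] Matrix n n R) :
    Matrix (m × κ) (m × κ) R →ₗ[R] Matrix (n × κ) (n × κ) R where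
  toFun M := .of fun p q => Φ (.of fun a b => M (a, p.2) (b, q.2)) p.1 q.1
  map_add' M N := by
    ext p q
    exact congr_fun₂ (map_add Φ (.of fun a b => M (a, p.2) (b, q.2)) _) p.1 q.1
  map_smul' c M := by
    ext p q
    exact congr_fun₂ (map_smul Φ c (.of fun a b => M (a, p.2) (b, q.2))) p.1 q.1

theorem ampliation_kronecker {R : Type*} [CommSemiring R] (Φ : Matrix m m R →ₗ[R] Matrix n n R)
    (A : Matrix m m R) (B : Matrix κ κ R) : ampliation κ Φ (A ⊗ₖ B) = Φ A ⊗ₖ B := by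
  ext p q
  have hblock : (.of fun a b => (A ⊗ₖ B) (a, p.2) (b, q.2)) = B p.2 q.2 • A := by
    ext a b
    exact mul_comm _ _
  change Φ (.of fun a b => (A ⊗ₖ B) (a, p.2) (b, q.2)) p.1 q.1 = _
  rw [hblock, map_smul]
  exact mul_comm _ _

theorem trace_unitary_conj {R : Type*} [CommRing R] [StarRing R] [Fintype n] [DecidableEq n]
    {V : Matrix n n R} (hV : V ∈ unitaryGroup n R) (A : Matrix n n R) :
    (V * A * Vᴴ).trace = A.trace := by
  rw [trace_mul_cycle, ← star_eq_conjTranspose, mem_unitaryGroup_iff'.mp hV, one_mul]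

theorem kronecker_mul_kronecker_mul_conjTranspose {R : Type*} [CommSemiring R] [StarRing R]
    [Fintype m] [Fintype κ] (V A : Matrix m m R) (W B : Matrix κ κ R) :
    (V ⊗ₖ W) * (A ⊗ₖ B) * (V ⊗ₖ W)ᴴ = (V * A * Vᴴ) ⊗ₖ (W * B * Wᴴ) := by
  rw [conjTranspose_kronecker, mul_kronecker_mul, mul_kronecker_mul]

end General

section Separability

open Matrix

variable {M : Matrix (Fin 3 × Fin 4) (Fin 3 × Fin 4) ℂ}

theorem Separable.unitary_kronecker_conj (hM : Separable M) {V : Matrix (Fin 3) (Fin 3) ℂ}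
    {W : Matrix (Fin 4) (Fin 4) ℂ} (hV : V ∈ unitaryGroup (Fin 3) ℂ)
    (hW : W ∈ unitaryGroup (Fin 4) ℂ) : Separable ((V ⊗ₖ W) * M * (V ⊗ₖ W)ᴴ) := by
  obtain ⟨N, w, σ, τ, hw, hw1, hσ, hτ, rfl⟩ := hM
  refine ⟨N, w, fun i => V * σ i * Vᴴ, fun i => W * τ i * Wᴴ, hw, hw1, fun i => ?_, fun i => ?_, ?_⟩
  · exact ⟨(hσ i).1.mul_mul_conjTranspose_same V, (trace_unitary_conj hV _).trans (hσ i).2⟩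
  · exact ⟨(hτ i).1.mul_mul_conjTranspose_same W, (trace_unitary_conj hW _).trans (hτ i).2⟩
  · simp only [Finset.mul_sum, Finset.sum_mul, Matrix.mul_smul, Matrix.smul_mul,
      kronecker_mul_kronecker_mul_conjTranspose]

theorem Separable.posSemidef_ampliation {n : Type*} [Finite n] (hM : Separable M)
    {Φ : Matrix (Fin 3) (Fin 3) ℂ →ₗ[ℂ] Matrix n n ℂ}
    (hΦ : ∀ A : Matrix (Fin 3) (Fin 3) ℂ, A.PosSemidef → (Φ A).PosSemidef) :
    (ampliation (Fin 4) Φ M).PosSemidef := by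
  obtain ⟨N, w, σ, τ, hw, -, hσ, hτ, rfl⟩ := hM
  simp only [map_sum, map_smul, ampliation_kronecker]
  exact posSemidef_sum _ fun i _ => ((hΦ _ (hσ i).1).kronecker (hτ i).1).smul
    (Complex.zero_le_real.mpr (hw i))

end Separability

section Choi

open Matrix

theorem choiMap_eq_diagonal_sub (A : Matrix (Fin 3) (Fin 3) ℂ) :
    choiMap A = (2 : ℂ)⁻¹ • (diagonal (fun i => 2 * A i i + A (i + 1) (i + 1)) - A) := by
  ext i j
  fin_cases i <;> fin_cases j <;> simp [choiMap] <;> ring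

/-- The Choi map bundled as a linear map, so that it can be ampliated. -/
def choiLinearMap : Matrix (Fin 3) (Fin 3) ℂ →ₗ[ℂ] Matrix (Fin 3) (Fin 3) ℂ where
  toFun := choiMap
  map_add' A B := by
    ext i j
    fin_cases i <;> fin_cases j <;> simp [choiMap] <;> ring
  map_smul' c A := by
    ext i j
    fin_cases i <;> fin_cases j <;> simp [choiMap] <;> ring

theorem lamTensorId_eq_ampliation (M : Matrix (Fin 3 × Fin 4) (Fin 3 × Fin 4) ℂ) :
    lamTensorId M = ampliation (Fin 4) choiLinearMap M := rfl

section CyclicInequality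

variable {K : Type*} [Field K] [LinearOrder K] [IsStrictOrderedRing K] {x : Fin 3 → K}

theorem one_le_sum_succ_div_two_mul_add_succ (hx : ∀ i, 0 ≤ x i) (hpos : 0 < ∑ i, x (i + 1)) :
    1 ≤ ∑ i, x (i + 1) / (2 * x i + x (i + 1)) := by
  have hden (i : Fin 3) : 0 ≤ 2 * x i + x (i + 1) :=
    add_nonneg (mul_nonneg zero_le_two (hx i)) (hx (i + 1))
  have hsplit (i : Fin 3) : x (i + 1) ^ 2 =
      x (i + 1) / (2 * x i + x (i + 1)) * (x (i + 1) * (2 * x i + x (i + 1))) := by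
    rcases eq_or_ne (2 * x i + x (i + 1)) 0 with h | h
    · have : x (i + 1) = 0 := by linarith [hx i, hx (i + 1)]
      simp [this]
    · field_simp
  -- Cauchy–Schwarz with weights `x (i+1) * (2 * x i + x (i+1))`, whose sum is a perfect square.
  have hcauchy := Finset.sum_sq_le_sum_mul_sum_of_sq_le_mul Finset.univ
    (fun i _ => div_nonneg (hx (i + 1)) (hden i))
    (fun i _ => mul_nonneg (hx (i + 1)) (hden i)) fun i _ => (hsplit i).le
  have hweights : ∑ i, x (i + 1) * (2 * x i + x (i + 1)) = (∑ i, x (i + 1)) ^ 2 := by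
    simp only [Fin.sum_univ_three, Fin.reduceAdd, zero_add]
    ring
  rw [hweights] at hcauchy
  exact le_of_mul_le_mul_right (by rwa [one_mul]) (pow_pos hpos 2)

theorem sum_div_two_mul_add_succ_le_one (hx : ∀ i, 0 ≤ x i) :
    ∑ i, x i / (2 * x i + x (i + 1)) ≤ 1 := by
  rcases (Finset.sum_nonneg fun i _ => hx (i + 1)).eq_or_lt' with hzero | hpos
  · have hx0 (i : Fin 3) : x i = 0 := by
      simpa only [sub_add_cancel] using
        (Finset.sum_eq_zero_iff_of_nonneg fun i _ => hx (i + 1)).mp hzero (i - 1)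
          (Finset.mem_univ _)
    simp [hx0]
  · have hcompl (i : Fin 3) : 2 * (x i / (2 * x i + x (i + 1))) +
        x (i + 1) / (2 * x i + x (i + 1)) ≤ 1 := by
      rw [← mul_div_assoc, ← add_div]
      exact div_self_le_one _
    have hsum := Finset.sum_le_sum fun i (_ : i ∈ Finset.univ) => hcompl i
    simp only [Finset.sum_add_distrib, ← Finset.mul_sum, Finset.sum_const, Finset.card_univ,
      Fintype.card_fin, nsmul_eq_mul, mul_one, Nat.cast_ofNat] at hsum
    linarith [one_le_sum_succ_div_two_mul_add_succ hx hpos]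

end CyclicInequality

theorem posSemidef_choiMap_vecMulVec (x : Fin 3 → ℂ) :
    (choiMap (vecMulVec x (star x))).PosSemidef := by
  let d (i : Fin 3) : ℝ := 2 * ‖x i‖ ^ 2 + ‖x (i + 1)‖ ^ 2
  have hdiag (i : Fin 3) : 2 * vecMulVec x (star x) i i +
      vecMulVec x (star x) (i + 1) (i + 1) = (d i : ℂ) := by
    simp [d, vecMulVec_apply, Complex.mul_conj']
  simp only [choiMap_eq_diagonal_sub, hdiag]
  refine (posSemidef_diagonal_sub_vecMulVec (fun i => by positivity) (fun i hi => ?_)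
    (sum_div_two_mul_add_succ_le_one fun i => sq_nonneg ‖x i‖)).smul (by simp)
  have : ‖x i‖ ^ 2 = 0 := by
    have h1 := sq_nonneg ‖x i‖
    have h2 := sq_nonneg ‖x (i + 1)‖
    change 2 * ‖x i‖ ^ 2 + ‖x (i + 1)‖ ^ 2 = 0 at hi
    linarith
  simpa using this

theorem posSemidef_choiMap {A : Matrix (Fin 3) (Fin 3) ℂ} (hA : A.PosSemidef) :
    (choiMap A).PosSemidef :=
  posSemidef_map_of_vecMulVec (Φ := choiLinearMap) posSemidef_choiMap_vecMulVec hA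

end Choi

section Witness

open Matrix

theorem ofReal_sqrt_three_sq : (√3 : ℂ) ^ 2 = 3 := by
  rw [← Complex.ofReal_pow, Real.sq_sqrt zero_le_three, Complex.ofReal_ofNat]

theorem U_mem_unitaryGroup : U ∈ unitaryGroup (Fin 3) ℂ := by
  rw [mem_unitaryGroup_iff]
  ext i j
  fin_cases i <;> fin_cases j <;> simp [U, mul_apply, Fin.sum_univ_three, map_ofNat]
  · linear_combination 4⁻¹ * ofReal_sqrt_three_sq
  · ring
  · ring
  · linear_combination 4⁻¹ * ofReal_sqrt_three_sq

/-- The `ℂ³` factor of the product vector `φ_j`, before normalization. -/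
def phiLeft : Fin 6 → Fin 3 → ℂ :=
  ![dif 0 1, dif 2 0, ket 1, dif 1 2, ket 0, 1]

/-- The `ℂ⁴` factor of the product vector `φ_j`, before normalization, with the computational
basis of `ℂ² ⊗ ℂ²` in lexicographic order. -/
def phiRight : Fin 6 → Fin 4 → ℂ :=
  ![![1, 0, 0, 0], ![0, 0, 1, 0], ![0, 0, 1, -1], ![0, 1, 0, 0], ![0, 1, 0, -1], ![1, 1, 1, 1]]

/-- The squared norm of the unnormalized product vector `phiLeft j ⊗ phiRight j`. -/
def phiNormSq : Fin 6 → ℝ := ![2, 2, 2, 2, 2, 12]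

theorem phi'_eq_smul (j : Fin 6) :
    phi' j = (√(phiNormSq j) : ℂ)⁻¹ • fun p => phiLeft j p.1 * phiRight j p.2 := by
  ext ⟨i, k⟩
  fin_cases j <;> fin_cases k <;>
    simp [phi', phi, phiNormSq, phiLeft, phiRight, split4, tp, ket, dif, neg_ite]

theorem vecMulVec_phi' (j : Fin 6) : vecMulVec (phi' j) (star (phi' j)) = (phiNormSq j : ℂ)⁻¹ •
    (vecMulVec (phiLeft j) (star (phiLeft j)) ⊗ₖ vecMulVec (phiRight j) (star (phiRight j))) := by
  have hnonneg : 0 ≤ phiNormSq j := by fin_cases j <;> simp [phiNormSq]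
  have hscale : (√(phiNormSq j) : ℂ)⁻¹ * star (√(phiNormSq j) : ℂ)⁻¹ = (phiNormSq j : ℂ)⁻¹ := by
    rw [star_inv₀, Complex.star_def, Complex.conj_ofReal, ← mul_inv, ← Complex.ofReal_mul,
      Real.mul_self_sqrt hnonneg]
  rw [phi'_eq_smul, star_smul, smul_vecMulVec, vecMulVec_smul, smul_smul, hscale,
    ← vecMulVec_prod]
  simp only [Pi.star_def, star_mul']

/-- The operator `Λ(U a_j a_j* U*)`, where `a_j` is the `ℂ³` factor of `φ_j`. -/
def rotatedChoi (j : Fin 6) : Matrix (Fin 3) (Fin 3) ℂ :=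
  choiMap (vecMulVec (U *ᵥ phiLeft j) (star (U *ᵥ phiLeft j)))

theorem choiMap_one : choiMap 1 = 1 := by
  have hdiag : diagonal (fun _ : Fin 3 => (2 * 1 + 1 : ℂ)) = (3 : ℂ) • 1 := by
    rw [smul_one_eq_diagonal]
    norm_num
  simp only [choiMap_eq_diagonal_sub, one_apply_eq, hdiag]
  module

theorem lamTensorId_kronecker (A : Matrix (Fin 3) (Fin 3) ℂ) (B : Matrix (Fin 4) (Fin 4) ℂ) :
    lamTensorId (A ⊗ₖ B) = choiMap A ⊗ₖ B :=
  ampliation_kronecker choiLinearMap A B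

theorem lamTensorId_conj_rho :
    lamTensorId ((U ⊗ₖ (1 : Matrix (Fin 4) (Fin 4) ℂ)) * rho *
        (U ⊗ₖ (1 : Matrix (Fin 4) (Fin 4) ℂ))ᴴ) =
      (6 : ℂ)⁻¹ • (1 - ∑ j, (phiNormSq j : ℂ)⁻¹ •
        (rotatedChoi j ⊗ₖ vecMulVec (phiRight j) (star (phiRight j)))) := by
  have hUU : U * Uᴴ = 1 := mem_unitaryGroup_iff.mp U_mem_unitaryGroup
  have hrot (j : Fin 6) : U * vecMulVec (phiLeft j) (star (phiLeft j)) * Uᴴ =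
      vecMulVec (U *ᵥ phiLeft j) (star (U *ᵥ phiLeft j)) := by
    rw [mul_vecMulVec, vecMulVec_mul, star_mulVec]
  rw [rho, ← one_kronecker_one]
  simp only [vecMulVec_phi', mul_sub, sub_mul, Finset.mul_sum, Finset.sum_mul, Matrix.mul_smul,
    Matrix.smul_mul, kronecker_mul_kronecker_mul_conjTranspose, hrot, mul_one, one_mul,
    conjTranspose_one, hUU, lamTensorId_eq_ampliation, map_smul, map_sub, map_sum]
  simp only [← lamTensorId_eq_ampliation, lamTensorId_kronecker, choiMap_one, rotatedChoi]

/-- The witness vector in `ℂ³ ⊗ ℂ⁴`, as the matrix whose columns are its three `ℂ⁴`-blocks. It is a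
small integer approximation of the eigenvector for the negative eigenvalue. -/
def witness : Matrix (Fin 4) (Fin 3) ℂ :=
  !![-2, 1, 1; 4, 3, 5; 3, -3, 5; -6, 0, 0]

theorem U_mulVec_phiLeft (j : Fin 6) : U *ᵥ phiLeft j =
    (![![(1 - √3) / 2, -(1 + √3) / 2, 0], ![-1 / 2, √3 / 2, 1], ![√3 / 2, 1 / 2, 0],
      ![√3 / 2, 1 / 2, -1], ![1 / 2, -√3 / 2, 0], ![(1 + √3) / 2, (1 - √3) / 2, 1]] :
      Fin 6 → Fin 3 → ℂ) j := by
  ext i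
  fin_cases j <;> fin_cases i <;>
    simp [U, phiLeft, dif, ket, mulVec, dotProduct, Fin.sum_univ_three] <;> ring

theorem star_phiRight_vecMul_witness (j : Fin 6) : star (phiRight j) ᵥ* witness =
    (![![-2, 1, 1], ![3, -3, 5], ![9, -3, 5], ![4, 3, 5], ![10, 3, 5], ![-1, 1, 11]] :
      Fin 6 → Fin 3 → ℂ) j := by
  ext i
  fin_cases j <;> fin_cases i <;>
    simp [phiRight, witness, vecMul, dotProduct, Fin.sum_univ_four] <;> norm_num

theorem star_dotProduct_choiMap_vecMulVec_mulVec (x y : Fin 3 → ℂ) :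
    star y ⬝ᵥ (choiMap (vecMulVec x (star x)) *ᵥ y) = 2⁻¹ *
      (∑ i, (2 * (x i * star (x i)) + x (i + 1) * star (x (i + 1))) * (star (y i) * y i) -
        star (star x ⬝ᵥ y) * (star x ⬝ᵥ y)) := by
  rw [choiMap_eq_diagonal_sub, smul_mulVec, dotProduct_smul, smul_eq_mul,
    star_dotProduct_diagonal_sub_vecMulVec_mulVec]
  rfl

theorem rotatedChoi_form_witness (j : Fin 6) :
    star (star (phiRight j) ᵥ* witness) ⬝ᵥ
        (rotatedChoi j *ᵥ (star (phiRight j) ᵥ* witness)) =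
      (![6, (142 + 21 * √3) / 4, (204 + 27 * √3) / 4, 43 + 7 * √3, (113 + 15 * √3) / 2,
        (245 + 82 * √3) / 2] : Fin 6 → ℂ) j := by
  rw [rotatedChoi, star_dotProduct_choiMap_vecMulVec_mulVec, star_phiRight_vecMul_witness,
    U_mulVec_phiLeft]
  fin_cases j <;> simp [dotProduct, Fin.sum_univ_three, map_ofNat]
  · linear_combination 7 / 4 * ofReal_sqrt_three_sq
  · linear_combination 9 / 4 * ofReal_sqrt_three_sq
  · linear_combination 53 / 4 * ofReal_sqrt_three_sq
  · linear_combination 41 / 8 * ofReal_sqrt_three_sq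
  · linear_combination 109 / 8 * ofReal_sqrt_three_sq
  · linear_combination 61 / 4 * ofReal_sqrt_three_sq

theorem lamTensorId_conj_rho_form_witness :
    star (vec witness) ⬝ᵥ (lamTensorId ((U ⊗ₖ (1 : Matrix (Fin 4) (Fin 4) ℂ)) * rho *
        (U ⊗ₖ (1 : Matrix (Fin 4) (Fin 4) ℂ))ᴴ) *ᵥ vec witness) =
      (((691 - 400 * √3) / 144 : ℝ) : ℂ) := by
  have hnorm : star (vec witness) ⬝ᵥ vec witness = 135 := by
    rw [star_vec_dotProduct_vec]
    simp [witness, trace, mul_apply, Fin.sum_univ_three, Fin.sum_univ_four, map_ofNat]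
    norm_num
  rw [lamTensorId_conj_rho]
  simp only [smul_mulVec, sub_mulVec, sum_mulVec, one_mulVec, dotProduct_smul, dotProduct_sub,
    dotProduct_sum, star_vec_dotProduct_kronecker_vecMulVec_mulVec, rotatedChoi_form_witness,
    hnorm, smul_eq_mul]
  simp [Fin.sum_univ_six, phiNormSq]
  ring

theorem not_posSemidef_lamTensorId_conj_rho :
    ¬ (lamTensorId ((U ⊗ₖ (1 : Matrix (Fin 4) (Fin 4) ℂ)) * rho *
        (U ⊗ₖ (1 : Matrix (Fin 4) (Fin 4) ℂ))ᴴ)).PosSemidef := by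
  intro h
  have hform := h.dotProduct_mulVec_nonneg (vec witness)
  rw [lamTensorId_conj_rho_form_witness, Complex.zero_le_real] at hform
  have hsqrt : (1.73 : ℝ) < √3 := Real.lt_sqrt_of_sq_lt (by norm_num)
  linarith

end Witness

/-- `(Λ ⊗ id)((U ⊗ I) ρ (U ⊗ I)*)` is not positive semidefinite; consequently
`ρ` is not separable across the `ℂ^3 | ℂ^4` cut. -/
theorem stmt11 :
    ¬ (lamTensorId ((U ⊗ₖ (1 : Matrix (Fin 4) (Fin 4) ℂ)) * rho *
        (U ⊗ₖ (1 : Matrix (Fin 4) (Fin 4) ℂ)).conjTranspose)).PosSemidef ∧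
    ¬ Separable rho := by
  refine ⟨not_posSemidef_lamTensorId_conj_rho, fun hsep => ?_⟩
  have hconj := hsep.unitary_kronecker_conj U_mem_unitaryGroup (one_mem _)
  exact not_posSemidef_lamTensorId_conj_rho
    (hconj.posSemidef_ampliation (Φ := choiLinearMap) fun _ => posSemidef_choiMap)

end
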